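/- arXiv:2106.03448 — 2 statements merged into one kernel-verified Lean document; each statement's English description precedes it below -/
import Mathlib

section
/- Let A₀ : D(A₀) ⊂ H₀ → H₁ and A₁ : D(A₁) ⊂ H₁ → H₂ be densely defined closed linear operators between Hilbert spaces satisfying R(A₀) ⊂ N(A₁), and set N_{0,1} := N(A₁) ∩ N(A₀*). Then the orthogonal decomposition D(A₁) ∩ D(A₀*) = (closure(R(A₀)) ∩ D(A₀*)) ⊕ N_{0,1} ⊕ (D(A₁) ∩ closure(R(A₁*))) holds: the three summands are pairwise orthogonal in H₁, their sum is D(A₁) ∩ D(A₀*), and each summand is contained in D(A₁) ∩ D(A₀*). -/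
/-!
The decomposition rests on the two kernel identities `N(A₀*) = R(A₀)ᗮ` and `N(A₁) = R(A₁*)ᗮ`
(`kerSub_adjoint_eq` and `kerSub_eq`). The second uses that `A₁` is closed: its graph is a closed
subspace, so a vector orthogonal to the orthogonal complement of the graph lies in the graph.

Put `R₀ = closure R(A₀)` and `R₁ = closure R(A₁*)`. The complex property gives
`R₀ ≤ N(A₁) = R₁ᗮ`, hence also `R₁ ≤ R₀ᗮ = N(A₀*)`; these inclusions yield the orthogonality
relations and the inclusions of the summands. Given `x`, project onto `R₀` to get `x = a + y` with
`y ∈ N(A₀*)`, then project `y` onto `R₁` to get `y = c + b` with `b ∈ N(A₁)`. Domain membership of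
`a`, `b`, `c` follows because kernels are contained in domains.
-/

open Filter Topology

noncomputable section

/-- The kernel `N(A)` of a partially defined linear operator `A`, as a submodule of the
ambient space. -/
def LinearPMap.kerSub {𝕜 E F : Type*} [RCLike 𝕜] [NormedAddCommGroup E]
    [InnerProductSpace 𝕜 E] [NormedAddCommGroup F] [InnerProductSpace 𝕜 F]
    (A : E →ₗ.[𝕜] F) : Submodule 𝕜 E :=
  (LinearMap.ker A.toFun).map A.domain.subtype

section KernelRange

variable {𝕜 E F : Type*} [RCLike 𝕜] [NormedAddCommGroup E] [InnerProductSpace 𝕜 E]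
  [NormedAddCommGroup F] [InnerProductSpace 𝕜 F]

theorem LinearPMap.mem_kerSub_iff (A : E →ₗ.[𝕜] F) (x : E) :
    x ∈ A.kerSub ↔ ∃ h : x ∈ A.domain, A ⟨x, h⟩ = 0 := by
  constructor
  · rintro ⟨⟨y, hy⟩, h, rfl⟩
    exact ⟨hy, h⟩
  · rintro ⟨h, hval₀⟩
    exact ⟨⟨x, h⟩, hval₀, rfl⟩

theorem LinearPMap.kerSub_le_domain (A : E →ₗ.[𝕜] F) : A.kerSub ≤ A.domain := by
  intro x hx
  exact ((A.mem_kerSub_iff x).1 hx).1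

theorem LinearPMap.kerSub_adjoint_eq [CompleteSpace E] (A : E →ₗ.[𝕜] F)
    (hA : Dense (A.domain : Set E)) :
    A.adjoint.kerSub = (LinearMap.range A.toFun)ᗮ := by
  ext y
  rw [LinearPMap.mem_kerSub_iff, Submodule.mem_orthogonal']
  constructor
  · rintro ⟨hy, h0⟩ _ ⟨x, rfl⟩
    have h := LinearPMap.adjoint_isFormalAdjoint hA ⟨y, hy⟩ x
    rw [h0, inner_zero_left] at h
    exact h.symm
  · intro h
    have hval₀ : ∀ x : A.domain, inner 𝕜 (0 : E) (x : E) = inner 𝕜 y (A x) := fun x => by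
      rw [inner_zero_left]
      exact (h _ ⟨x, rfl⟩).symm
    exact ⟨LinearPMap.mem_adjoint_domain_of_exists y ⟨0, hval₀⟩,
      LinearPMap.adjoint_apply_eq hA _ hval₀⟩

/-- For `x ⟂ R(A*)`, the pair `(x, 0)` is orthogonal to the orthogonal complement of the graph of
`A`, hence lies in the graph because the graph is closed. -/
theorem LinearPMap.kerSub_eq [CompleteSpace E] [CompleteSpace F] (A : E →ₗ.[𝕜] F)
    (hA : Dense (A.domain : Set E)) (hc : A.IsClosed) :
    A.kerSub = (LinearMap.range A.adjoint.toFun)ᗮ := by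
  ext x
  rw [LinearPMap.mem_kerSub_iff, Submodule.mem_orthogonal]
  constructor
  · rintro ⟨hx, h0⟩ _ ⟨y, rfl⟩
    have h := LinearPMap.adjoint_isFormalAdjoint hA y ⟨x, hx⟩
    rw [h0, inner_zero_right] at h
    exact h
  · intro h
    -- The product `E × F` carries the sup norm, so the graph is moved to the Hilbert sum.
    let G : Submodule 𝕜 (WithLp 2 (E × F)) :=
      A.graph.comap (WithLp.linearEquiv 2 𝕜 (E × F)).toLinearMap
    have hG : _root_.IsClosed (G : Set (WithLp 2 (E × F))) :=
      _root_.IsClosed.preimage (WithLp.prod_continuous_ofLp 2 E F) hc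
    have hmem : WithLp.toLp 2 (x, (0 : F)) ∈ G := by
      rw [← hG.submodule_topologicalClosure_eq, ← Submodule.orthogonal_orthogonal_eq_closure,
        Submodule.mem_orthogonal]
      intro p hp
      rw [Submodule.mem_orthogonal'] at hp
      -- Orthogonality of `p = (u, v)` to the graph says `v ∈ D(A*)` and `A* v = -u`.
      have hval₀ : ∀ z : A.domain, inner 𝕜 (-p.fst) (z : E) = inner 𝕜 p.snd (A z) := fun z => by
        have := hp (WithLp.toLp 2 ((z : E), A z)) (A.mem_graph z)
        rw [WithLp.prod_inner_apply] at this
        rw [inner_neg_left]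
        exact neg_eq_of_add_eq_zero_right this
      have hd := LinearPMap.mem_adjoint_domain_of_exists p.snd ⟨_, hval₀⟩
      have hval := LinearPMap.adjoint_apply_eq hA ⟨p.snd, hd⟩ hval₀
      have h0 := h _ ⟨⟨p.snd, hd⟩, hval⟩
      rw [inner_neg_left, neg_eq_zero] at h0
      rw [WithLp.prod_inner_apply]
      simpa using h0
    obtain ⟨z, hz1, hz2⟩ := (LinearPMap.mem_graph_iff A).1 hmem
    have hz1 : (z : E) = x := hz1
    subst hz1
    exact ⟨z.2, hz2⟩

end KernelRange

/-- For a Hilbert complex `A₀, A₁` with cohomology group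
`N₀₁ = N(A₁) ∩ N(A₀*)`, the orthogonal decomposition
`D(A₁) ∩ D(A₀*) = (closure(R(A₀)) ∩ D(A₀*)) ⊕ N₀₁ ⊕ (D(A₁) ∩ closure(R(A₁*)))` holds:
each summand is contained in `D(A₁) ∩ D(A₀*)`, the summands are pairwise orthogonal in `H₁`,
and every element of `D(A₁) ∩ D(A₀*)` is a sum of three such elements. -/
theorem domain_orthogonal_decomposition
    {𝕜 H₀ H₁ H₂ : Type*} [RCLike 𝕜]
    [NormedAddCommGroup H₀] [InnerProductSpace 𝕜 H₀] [CompleteSpace H₀]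
    [NormedAddCommGroup H₁] [InnerProductSpace 𝕜 H₁] [CompleteSpace H₁]
    [NormedAddCommGroup H₂] [InnerProductSpace 𝕜 H₂] [CompleteSpace H₂]
    (A₀ : H₀ →ₗ.[𝕜] H₁) (A₁ : H₁ →ₗ.[𝕜] H₂)
    (h₀dense : Dense (A₀.domain : Set H₀)) (h₀closed : A₀.IsClosed)
    (h₁dense : Dense (A₁.domain : Set H₁)) (h₁closed : A₁.IsClosed)
    (hcomplex : LinearMap.range A₀.toFun ≤ A₁.kerSub) :
    (((LinearMap.range A₀.toFun).topologicalClosure : Set H₁) ∩ A₀.adjoint.domain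
        ⊆ (A₁.domain : Set H₁) ∩ A₀.adjoint.domain) ∧
    ((A₁.kerSub ⊓ A₀.adjoint.kerSub : Submodule 𝕜 H₁) : Set H₁)
        ⊆ (A₁.domain : Set H₁) ∩ A₀.adjoint.domain ∧
    ((A₁.domain : Set H₁) ∩ ((LinearMap.range A₁.adjoint.toFun).topologicalClosure : Set H₁)
        ⊆ (A₁.domain : Set H₁) ∩ A₀.adjoint.domain) ∧
    (∀ u ∈ ((LinearMap.range A₀.toFun).topologicalClosure : Set H₁) ∩ A₀.adjoint.domain,
      ∀ v ∈ ((A₁.kerSub ⊓ A₀.adjoint.kerSub : Submodule 𝕜 H₁) : Set H₁),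
        @inner 𝕜 _ _ u v = 0) ∧
    (∀ u ∈ ((LinearMap.range A₀.toFun).topologicalClosure : Set H₁) ∩ A₀.adjoint.domain,
      ∀ w ∈ (A₁.domain : Set H₁) ∩
          ((LinearMap.range A₁.adjoint.toFun).topologicalClosure : Set H₁),
        @inner 𝕜 _ _ u w = 0) ∧
    (∀ v ∈ ((A₁.kerSub ⊓ A₀.adjoint.kerSub : Submodule 𝕜 H₁) : Set H₁),
      ∀ w ∈ (A₁.domain : Set H₁) ∩
          ((LinearMap.range A₁.adjoint.toFun).topologicalClosure : Set H₁),
        @inner 𝕜 _ _ v w = 0) ∧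
    (∀ x ∈ (A₁.domain : Set H₁) ∩ A₀.adjoint.domain,
      ∃ a ∈ ((LinearMap.range A₀.toFun).topologicalClosure : Set H₁) ∩ A₀.adjoint.domain,
      ∃ b ∈ ((A₁.kerSub ⊓ A₀.adjoint.kerSub : Submodule 𝕜 H₁) : Set H₁),
      ∃ c ∈ (A₁.domain : Set H₁) ∩
          ((LinearMap.range A₁.adjoint.toFun).topologicalClosure : Set H₁),
        x = a + b + c) := by
  have hN₀ := A₀.kerSub_adjoint_eq h₀dense
  have hN₁ := A₁.kerSub_eq h₁dense h₁closed
  rw [← Submodule.orthogonal_closure] at hN₀ hN₁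
  have hR₀ : (LinearMap.range A₀.toFun).topologicalClosure ≤ A₁.kerSub := by
    refine Submodule.topologicalClosure_minimal _ hcomplex ?_
    rw [hN₁]
    exact Submodule.isClosed_orthogonal _
  have hR₁ : (LinearMap.range A₁.adjoint.toFun).topologicalClosure ≤ A₀.adjoint.kerSub := by
    rw [hN₀]
    rw [hN₁] at hR₀
    exact (Submodule.le_orthogonal_orthogonal _).trans (Submodule.orthogonal_le hR₀)
  have hD₁ := A₁.kerSub_le_domain
  have hD₀ := A₀.adjoint.kerSub_le_domain
  refine ⟨fun u hu => ⟨hD₁ (hR₀ hu.1), hu.2⟩, fun v hv => ⟨hD₁ hv.1, hD₀ hv.2⟩,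
    fun w hw => ⟨hw.1, hD₀ (hR₁ hw.2)⟩, ?_, ?_, ?_, ?_⟩
  · intro u hu v hv
    have h := hv.2
    rw [hN₀] at h
    exact Submodule.inner_right_of_mem_orthogonal hu.1 h
  · intro u hu w hw
    have h := hR₁ hw.2
    rw [hN₀] at h
    exact Submodule.inner_right_of_mem_orthogonal hu.1 h
  · intro v hv w hw
    have h := hv.1
    rw [hN₁] at h
    exact Submodule.inner_left_of_mem_orthogonal hw.2 h
  · rintro x ⟨hx₁, hx₀⟩
    obtain ⟨a, ha, y, hy, rfl⟩ :=
      (LinearMap.range A₀.toFun).topologicalClosure.exists_add_mem_mem_orthogonal x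
    obtain ⟨c, hc, b, hb, rfl⟩ :=
      (LinearMap.range A₁.adjoint.toFun).topologicalClosure.exists_add_mem_mem_orthogonal y
    rw [← hN₀] at hy
    rw [← hN₁] at hb
    have hcb : c + b ∈ A₁.domain := (Submodule.add_mem_iff_right _ (hD₁ (hR₀ ha))).1 hx₁
    refine ⟨a, ⟨ha, (Submodule.add_mem_iff_left _ (hD₀ hy)).1 hx₀⟩,
      b, ⟨hb, (Submodule.add_mem_iff_right _ (hR₁ hc)).1 hy⟩,
      c, ⟨(Submodule.add_mem_iff_left _ (hD₁ hb)).1 hcb, hc⟩, ?_⟩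
    abel
end
end

section
/- Let A₀ : D(A₀) ⊂ H₀ → H₁ and A₁ : D(A₁) ⊂ H₁ → H₂ be densely defined closed linear operators between Hilbert spaces satisfying R(A₀) ⊂ N(A₁), and set N_{0,1} := N(A₁) ∩ N(A₀*). Then the following are equivalent: (i) the embeddings D(A₀) ∩ N(A₀)^⊥ ↪ H₀ and D(A₁) ∩ N(A₁)^⊥ ↪ H₁ are compact (bounded graph-norm sequences have convergent subsequences in H₀ resp. H₁) and N_{0,1} is finite-dimensional; (ii) the embedding D(A₁) ∩ D(A₀*) ↪ H₁ is compact, i.e., every sequence (xₙ) in D(A₁) ∩ D(A₀*) with supₙ(‖xₙ‖_{H₁} + ‖A₁xₙ‖_{H₂} + ‖A₀*xₙ‖_{H₀}) < ∞ has a subsequence converging in H₁. -/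
/-!
Write `K = N(A₀*)`. Since `A₀` is densely defined, `K = R(A₀)^⊥`, and the complex property gives
`N(A₁)^⊥ ⊆ K` and `K^⊥ ⊆ N(A₁)`. Hence `H₁` splits orthogonally as `N(A₁)^⊥ ⊕ N₀₁ ⊕ K^⊥`, and this
splitting is compatible with `D(A₁) ∩ D(A₀*)`: `A₁` only sees the first summand and `A₀*` only the
third. So compactness of `D(A₁) ∩ D(A₀*) ↪ H₁` amounts to compactness of the reduced embedding of
`A₁`, finite-dimensionality of `N₀₁`, and compactness of the reduced embedding of `A₀*`.

It remains to see that the reduced embedding is compact for `A₀` if and only if it is for `A₀*`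
(`LinearPMap.CompactRedEmbedding.of_formalAdjoint`, applied in both directions). Compactness for `A`
gives a Poincaré estimate `‖y‖ ≤ c ‖A y‖` on `D(A) ∩ N(A)^⊥`. Given a bounded sequence `wₙ` in
`D(A*) ∩ N(A*)^⊥`, approximate `wₙ` by `A yₙ` with `yₙ ∈ N(A)^⊥`; the `yₙ` are graph-norm bounded,
so they subconverge, and `‖wₙ - wₘ‖² ≈ ⟪wₙ - wₘ, A (yₙ - yₘ)⟫ = ⟪A* (wₙ - wₘ), yₙ - yₘ⟫` shows
that the `wₙ` are Cauchy along the same subsequence. Going from `A₀*` back to `A₀` uses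
`N(A₀)^⊥ = closure R(A₀*)`, which rests on the closedness of `A₀`.

Operators are handled through their graphs, which are submodules, so that no proofs of domain
membership need to be carried inside terms.
-/

open Filter Topology

noncomputable section

/-- The embedding `D(A) ∩ N(A)^⊥ ↪ E` (with the graph norm on the domain) is compact. -/
def LinearPMap.CompactRedEmbedding {𝕜 E F : Type*} [RCLike 𝕜] [NormedAddCommGroup E]
    [InnerProductSpace 𝕜 E] [NormedAddCommGroup F] [InnerProductSpace 𝕜 F]
    (A : E →ₗ.[𝕜] F) : Prop :=
  ∀ x : ℕ → A.domain, (∀ n, ((x n : E) ∈ (A.kerSub)ᗮ)) →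
    (∃ C : ℝ, ∀ n, ‖(x n : E)‖ + ‖A (x n)‖ ≤ C) →
    ∃ φ : ℕ → ℕ, StrictMono φ ∧
      ∃ l : E, Filter.Tendsto (fun n => (x (φ n) : E)) Filter.atTop (nhds l)

namespace LinearPMap

section Aux

variable {𝕜 E F : Type*} [RCLike 𝕜] [NormedAddCommGroup E] [InnerProductSpace 𝕜 E]
  [NormedAddCommGroup F] [InnerProductSpace 𝕜 F]

lemma mem_kerSub_iff_graph (A : E →ₗ.[𝕜] F) (x : E) : x ∈ A.kerSub ↔ (x, (0 : F)) ∈ A.graph := by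
  rw [mem_graph_iff', kerSub, Submodule.mem_map]
  constructor
  · rintro ⟨y, hy, rfl⟩
    exact ⟨y, Prod.ext rfl hy⟩
  · rintro ⟨y, hy⟩
    exact ⟨y, (Prod.ext_iff.1 hy).2, (Prod.ext_iff.1 hy).1⟩

lemma isClosed_kerSub {A : E →ₗ.[𝕜] F} (hA : A.IsClosed) : _root_.IsClosed (A.kerSub : Set E) := by
  have h : (A.kerSub : Set E) = (fun x : E => (x, (0 : F))) ⁻¹' (A.graph : Set (E × F)) := by
    ext x
    exact mem_kerSub_iff_graph A x
  rw [h]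
  exact _root_.IsClosed.preimage (by fun_prop) hA

lemma hasOrthogonalProjection_kerSub [CompleteSpace E] {A : E →ₗ.[𝕜] F} (hA : A.IsClosed) :
    A.kerSub.HasOrthogonalProjection := by
  have := (isClosed_kerSub hA).completeSpace_coe
  infer_instance

/-- The defining property of a compact reduced embedding, phrased for sequences in the graph. -/
lemma CompactRedEmbedding.exists_subseq {A : E →ₗ.[𝕜] F} (h : A.CompactRedEmbedding)
    {x : ℕ → E} {y : ℕ → F} (hxy : ∀ n, (x n, y n) ∈ A.graph) (hx : ∀ n, x n ∈ A.kerSubᗮ)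
    {C : ℝ} (hC : ∀ n, ‖x n‖ + ‖y n‖ ≤ C) :
    ∃ φ : ℕ → ℕ, StrictMono φ ∧ ∃ l : E, Tendsto (fun n => x (φ n)) atTop (𝓝 l) := by
  have h' : ∀ n, ∃ z : A.domain, (z : E) = x n ∧ A z = y n := fun n => (mem_graph_iff A).1 (hxy n)
  choose z hz hAz using h'
  simpa only [hz] using h z (fun n => by rw [hz]; exact hx n) ⟨C, fun n => by
    rw [hz, hAz]; exact hC n⟩

lemma mem_graph_adjoint_iff [CompleteSpace E] {A : E →ₗ.[𝕜] F} (hd : Dense (A.domain : Set E))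
    (y : F) (z : E) :
    (y, z) ∈ A.adjoint.graph ↔ ∀ a b, (a, b) ∈ A.graph → inner 𝕜 z a = inner 𝕜 y b := by
  constructor
  · intro h a b hab
    obtain ⟨y', rfl, rfl⟩ := (mem_graph_iff _).1 h
    obtain ⟨a', rfl, rfl⟩ := (mem_graph_iff _).1 hab
    exact adjoint_isFormalAdjoint hd y' a'
  · intro h
    have h' : ∀ x : A.domain, inner 𝕜 z (x : E) = inner 𝕜 y (A x) :=
      fun x => h _ _ (A.mem_graph x)
    have hy : y ∈ A.adjoint.domain := mem_adjoint_domain_of_exists _ ⟨z, h'⟩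
    exact (mem_graph_iff _).2 ⟨⟨y, hy⟩, rfl, adjoint_apply_eq hd ⟨y, hy⟩ h'⟩

lemma mem_range_iff_graph (A : E →ₗ.[𝕜] F) (b : F) :
    b ∈ LinearMap.range A.toFun ↔ ∃ a, (a, b) ∈ A.graph := by
  constructor
  · rintro ⟨a, rfl⟩
    exact ⟨a, A.mem_graph a⟩
  · rintro ⟨a, hab⟩
    obtain ⟨a', -, rfl⟩ := (mem_graph_iff _).1 hab
    exact ⟨a', rfl⟩

lemma kerSub_adjoint [CompleteSpace E] {A : E →ₗ.[𝕜] F} (hd : Dense (A.domain : Set E)) :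
    A.adjoint.kerSub = (LinearMap.range A.toFun)ᗮ := by
  ext y
  rw [mem_kerSub_iff_graph, mem_graph_adjoint_iff hd, Submodule.mem_orthogonal']
  constructor
  · intro h b hb
    obtain ⟨a, hab⟩ := (mem_range_iff_graph A b).1 hb
    simpa using (h a b hab).symm
  · intro h a b hab
    simpa using (h b ((mem_range_iff_graph A b).2 ⟨a, hab⟩)).symm

/-- The inclusion `R(A*)^⊥ ⊆ N(A)`. If `x ⊥ R(A*)`, then `(x, 0)` is orthogonal to the orthogonal
complement of the graph of `A` (whose elements are the pairs `(-A* v, v)`), hence lies in the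
closed graph. The graph is moved to `WithLp 2 (E × F)` to have an inner product on the product. -/
lemma orthogonal_range_adjoint_le [CompleteSpace E] [CompleteSpace F] {A : E →ₗ.[𝕜] F}
    (hd : Dense (A.domain : Set E)) (hA : A.IsClosed) :
    (LinearMap.range A.adjoint.toFun)ᗮ ≤ A.kerSub := by
  intro x hx
  rw [Submodule.mem_orthogonal] at hx
  rw [mem_kerSub_iff_graph]
  let G : Submodule 𝕜 (WithLp 2 (E × F)) :=
    A.graph.comap (WithLp.linearEquiv 2 𝕜 (E × F)).toLinearMap
  have hG : _root_.IsClosed (G : Set (WithLp 2 (E × F))) :=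
    _root_.IsClosed.preimage (WithLp.prod_continuous_ofLp 2 E F) hA
  have := hG.completeSpace_coe
  have key : WithLp.toLp 2 (x, (0 : F)) ∈ Gᗮᗮ := by
    rw [Submodule.mem_orthogonal]
    intro p hp
    rw [Submodule.mem_orthogonal'] at hp
    have hv : (p.snd, -p.fst) ∈ A.adjoint.graph := by
      rw [mem_graph_adjoint_iff hd]
      intro a b hab
      have h1 := hp (WithLp.toLp 2 (a, b)) hab
      rw [WithLp.prod_inner_apply] at h1
      rw [inner_neg_left]
      exact neg_eq_of_add_eq_zero_right h1
    have h2 := hx _ ((mem_range_iff_graph _ _).2 ⟨_, hv⟩)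
    rw [inner_neg_left, neg_eq_zero] at h2
    simpa [WithLp.prod_inner_apply] using h2
  rw [Submodule.orthogonal_orthogonal] at key
  exact key

lemma exists_orthogonal_decomp (K : Submodule 𝕜 E) [K.HasOrthogonalProjection] (x : E) :
    ∃ y ∈ K, ∃ z ∈ Kᗮ, x = y + z ∧ ‖y‖ ≤ ‖x‖ ∧ ‖z‖ ≤ ‖x‖ := by
  obtain ⟨y, hy, z, hz, rfl⟩ := K.exists_add_mem_mem_orthogonal x
  have h := norm_add_sq_eq_norm_sq_add_norm_sq_of_inner_eq_zero y z
    (Submodule.inner_right_of_mem_orthogonal hy hz)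
  refine ⟨y, hy, z, hz, rfl, ?_, ?_⟩
  · nlinarith [norm_nonneg (y + z), norm_nonneg y, norm_nonneg z]
  · nlinarith [norm_nonneg (y + z), norm_nonneg y, norm_nonneg z]

/-- Poincaré estimate on `D(A) ∩ N(A)^⊥`: otherwise there are normalised `xₙ ∈ N(A)^⊥` with
`A xₙ → 0`, and a limit point of them is a unit vector in `N(A) ∩ N(A)^⊥`. -/
lemma CompactRedEmbedding.poincare {A : E →ₗ.[𝕜] F} (h : A.CompactRedEmbedding)
    (hA : A.IsClosed) :
    ∃ c : ℝ, 0 ≤ c ∧ ∀ x y, (x, y) ∈ A.graph → x ∈ A.kerSubᗮ → ‖x‖ ≤ c * ‖y‖ := by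
  by_contra! hcon
  have h1 : ∀ n : ℕ, ∃ x y, (x, y) ∈ A.graph ∧ x ∈ A.kerSubᗮ ∧ ‖x‖ = 1 ∧
      ‖y‖ ≤ 1 / ((n : ℝ) + 1) := by
    intro n
    obtain ⟨x, y, hxy, hx, hlt⟩ := hcon ((n : ℝ) + 1) (by positivity)
    have hpos : 0 < ‖x‖ := lt_of_le_of_lt (by positivity) hlt
    -- Normalise by the scalar `‖x‖⁻¹`.
    refine ⟨((‖x‖⁻¹ : ℝ) : 𝕜) • x, ((‖x‖⁻¹ : ℝ) : 𝕜) • y, A.graph.smul_mem _ hxy,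
      Submodule.smul_mem _ _ hx, ?_, ?_⟩
    · rw [norm_smul, RCLike.norm_ofReal, abs_of_pos (by positivity)]
      field_simp
    · rw [norm_smul, RCLike.norm_ofReal, abs_of_pos (by positivity), inv_mul_eq_div,
        div_le_div_iff₀ hpos (by positivity)]
      linarith
  choose x y hxy hx hx1 hy using h1
  obtain ⟨φ, hφ, l, hl⟩ := h.exists_subseq hxy hx (C := 2) (fun n => by
    have : 1 / ((n : ℝ) + 1) ≤ 1 := by
      rw [div_le_one (by positivity)]
      linarith [Nat.cast_nonneg (α := ℝ) n]
    linarith [hx1 n, hy n])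
  have hy0 : Tendsto (fun n => y (φ n)) atTop (𝓝 0) :=
    (squeeze_zero_norm hy tendsto_one_div_add_atTop_nhds_zero_nat).comp hφ.tendsto_atTop
  have hlker : l ∈ A.kerSub := by
    rw [mem_kerSub_iff_graph]
    exact hA.mem_of_tendsto (hl.prodMk_nhds hy0) (Eventually.of_forall fun n => hxy _)
  have hlorth : l ∈ A.kerSubᗮ :=
    (Submodule.isClosed_orthogonal _).mem_of_tendsto hl (Eventually.of_forall fun n => hx _)
  have hl0 : l = 0 := inner_self_eq_zero.1 (Submodule.inner_right_of_mem_orthogonal hlker hlorth)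
  have hl1 : ‖l‖ = 1 := by
    refine tendsto_nhds_unique hl.norm ?_
    simp only [hx1]
    exact tendsto_const_nhds
  simp [hl0] at hl1

/-- Compactness of the reduced embedding passes from `A` to a formal adjoint `B` with
`N(B)^⊥ ⊆ closure R(A)`. -/
lemma CompactRedEmbedding.of_formalAdjoint [CompleteSpace E] [CompleteSpace F]
    {A : E →ₗ.[𝕜] F} {B : F →ₗ.[𝕜] E}
    (h : A.CompactRedEmbedding) (hA : A.IsClosed) (hBA : B.IsFormalAdjoint A)
    (hcl : B.kerSubᗮ ≤ (LinearMap.range A.toFun).topologicalClosure) :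
    B.CompactRedEmbedding := by
  rintro w hw ⟨C, hC⟩
  obtain ⟨c, hc0, hc⟩ := h.poincare hA
  have := hasOrthogonalProjection_kerSub hA
  have h1 : ∀ n : ℕ, ∃ y : A.domain, (y : E) ∈ A.kerSubᗮ ∧
      ‖(w n : F) - A y‖ ≤ 1 / ((n : ℝ) + 1) := by
    intro n
    obtain ⟨b, hb, hdist⟩ := Metric.mem_closure_iff.1 (hcl (hw n)) (1 / ((n : ℝ) + 1))
      (by positivity)
    obtain ⟨a, hab⟩ := (mem_range_iff_graph A b).1 hb
    obtain ⟨p, hp, q, hq, rfl, -, -⟩ := exists_orthogonal_decomp A.kerSub a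
    -- Removing the kernel component of the preimage does not change its image.
    have hqb : (q, b) ∈ A.graph := by
      simpa using A.graph.sub_mem hab ((mem_kerSub_iff_graph A p).1 hp)
    obtain ⟨q', hq', hb'⟩ := (mem_graph_iff A).1 hqb
    refine ⟨q', by rw [hq']; exact hq, ?_⟩
    rw [hb', ← dist_eq_norm]
    exact hdist.le
  choose y hy hwy using h1
  have he1 : ∀ n : ℕ, 1 / ((n : ℝ) + 1) ≤ 1 := fun n => by
    rw [div_le_one (by positivity)]
    linarith [Nat.cast_nonneg (α := ℝ) n]
  have hAy : ∀ n, ‖A (y n)‖ ≤ C + 1 := fun n => by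
    have h2 := norm_sub_norm_le (A (y n)) (w n : F)
    rw [norm_sub_rev] at h2
    linarith [hwy n, he1 n, hC n, norm_nonneg (B (w n))]
  obtain ⟨φ, hφ, l, hl⟩ := h y hy ⟨c * (C + 1) + (C + 1), fun n => by
    have h2 := hc _ _ (A.mem_graph (y n)) (hy n)
    have h3 := mul_le_mul_of_nonneg_left (hAy n) hc0
    linarith [hAy n]⟩
  refine ⟨φ, hφ, ?_⟩
  have hC0 : 0 ≤ C := le_trans (by positivity) (hC 0)
  have key : ∀ n m, ‖(w n : F) - w m‖ ^ 2 ≤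
      2 * C * (‖(y n : E) - y m‖ + (1 / ((n : ℝ) + 1) + 1 / ((m : ℝ) + 1))) := by
    intro n m
    set d : F := (w n : F) - w m with hd
    set r : F := ((w n : F) - A (y n)) - ((w m : F) - A (y m)) with hr
    have hdsplit : d = A (y n - y m) + r := by
      rw [hd, hr, map_sub]
      abel
    have hadj : inner 𝕜 (B (w n - w m)) ((y n - y m : A.domain) : E) =
        inner 𝕜 d (A (y n - y m)) := hBA (w n - w m) (y n - y m)
    have hdC : ‖d‖ ≤ 2 * C := by
      have := norm_sub_le (w n : F) (w m)
      linarith [hC n, hC m, norm_nonneg (B (w n)), norm_nonneg (B (w m))]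
    have hBC : ‖B (w n - w m)‖ ≤ 2 * C := by
      rw [map_sub]
      have := norm_sub_le (B (w n)) (B (w m))
      linarith [hC n, hC m, norm_nonneg (w n : F), norm_nonneg (w m : F)]
    have hrC : ‖r‖ ≤ 1 / ((n : ℝ) + 1) + 1 / ((m : ℝ) + 1) :=
      (norm_sub_le _ _).trans (add_le_add (hwy n) (hwy m))
    calc ‖d‖ ^ 2 = ‖inner 𝕜 d d‖ := by
          rw [inner_self_eq_norm_sq_to_K, norm_pow, RCLike.norm_ofReal, abs_norm]
      _ = ‖inner 𝕜 (B (w n - w m)) ((y n - y m : A.domain) : E) + inner 𝕜 d r‖ := by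
          rw [hadj, ← inner_add_right, ← hdsplit]
      _ ≤ ‖B (w n - w m)‖ * ‖((y n - y m : A.domain) : E)‖ + ‖d‖ * ‖r‖ :=
          (norm_add_le _ _).trans (add_le_add (norm_inner_le_norm _ _) (norm_inner_le_norm _ _))
      _ ≤ 2 * C * ‖(y n : E) - y m‖ +
          2 * C * (1 / ((n : ℝ) + 1) + 1 / ((m : ℝ) + 1)) := by
          refine add_le_add ?_ ?_
          · rw [AddSubgroupClass.coe_sub]
            gcongr
          · gcongr
      _ = _ := by ring
  have hcauchy : CauchySeq (fun n => (w (φ n) : F)) := by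
    rw [cauchySeq_iff_tendsto_dist_atTop_0]
    have hy0 := cauchySeq_iff_tendsto_dist_atTop_0.1 hl.cauchySeq
    have he0 : Tendsto (fun n => 1 / ((φ n : ℝ) + 1)) atTop (𝓝 0) :=
      (tendsto_one_div_add_atTop_nhds_zero_nat (𝕜 := ℝ)).comp hφ.tendsto_atTop
    rw [← prod_atTop_atTop_eq] at hy0 ⊢
    have hsum := (hy0.add ((he0.comp tendsto_fst).add (he0.comp tendsto_snd))).const_mul (2 * C)
    have hsqrt := hsum.sqrt
    simp only [add_zero, mul_zero, Real.sqrt_zero] at hsqrt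
    refine squeeze_zero (fun _ => dist_nonneg) (fun p => ?_) hsqrt
    refine Real.le_sqrt_of_sq_le ?_
    simpa [dist_eq_norm] using key (φ p.1) (φ p.2)
  exact cauchySeq_tendsto_of_complete hcauchy

end Aux

end LinearPMap

open LinearPMap

/-- For a Hilbert complex `A₀, A₁` with cohomology group
`N₀₁ = N(A₁) ∩ N(A₀*)`, the following are equivalent: (i) the reduced embeddings
`D(A₀) ∩ N(A₀)^⊥ ↪ H₀` and `D(A₁) ∩ N(A₁)^⊥ ↪ H₁` are compact and `N₀₁` is
finite-dimensional; (ii) the embedding `D(A₁) ∩ D(A₀*) ↪ H₁` is compact. -/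
theorem compactness_lemma
    {𝕜 H₀ H₁ H₂ : Type*} [RCLike 𝕜]
    [NormedAddCommGroup H₀] [InnerProductSpace 𝕜 H₀] [CompleteSpace H₀]
    [NormedAddCommGroup H₁] [InnerProductSpace 𝕜 H₁] [CompleteSpace H₁]
    [NormedAddCommGroup H₂] [InnerProductSpace 𝕜 H₂] [CompleteSpace H₂]
    (A₀ : H₀ →ₗ.[𝕜] H₁) (A₁ : H₁ →ₗ.[𝕜] H₂)
    (h₀dense : Dense (A₀.domain : Set H₀)) (h₀closed : A₀.IsClosed)
    (h₁dense : Dense (A₁.domain : Set H₁)) (h₁closed : A₁.IsClosed)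
    (hcomplex : LinearMap.range A₀.toFun ≤ A₁.kerSub) :
    (A₀.CompactRedEmbedding ∧ A₁.CompactRedEmbedding ∧
      FiniteDimensional 𝕜 (A₁.kerSub ⊓ A₀.adjoint.kerSub : Submodule 𝕜 H₁)) ↔
    (∀ x : ℕ → H₁, ∀ (h₁ : ∀ n, x n ∈ A₁.domain) (h₂ : ∀ n, x n ∈ A₀.adjoint.domain),
      (∃ C : ℝ, ∀ n,
        ‖x n‖ + ‖A₁ ⟨x n, h₁ n⟩‖ + ‖A₀.adjoint ⟨x n, h₂ n⟩‖ ≤ C) →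
      ∃ φ : ℕ → ℕ, StrictMono φ ∧
        ∃ l : H₁, Tendsto (fun n => x (φ n)) atTop (𝓝 l)) := by
  have h₀'closed : A₀.adjoint.IsClosed := adjoint_isClosed h₀dense
  have hformal := adjoint_isFormalAdjoint h₀dense
  have hN₁K : A₁.kerSubᗮ ≤ A₀.adjoint.kerSub := by
    rw [kerSub_adjoint h₀dense]
    exact Submodule.orthogonal_le hcomplex
  have hKcl : A₀.adjoint.kerSubᗮ ≤ (LinearMap.range A₀.toFun).topologicalClosure := by
    rw [kerSub_adjoint h₀dense, Submodule.orthogonal_orthogonal_eq_closure]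
  have hclN₁ : (LinearMap.range A₀.toFun).topologicalClosure ≤ A₁.kerSub :=
    Submodule.topologicalClosure_minimal _ hcomplex (isClosed_kerSub h₁closed)
  constructor
  · rintro ⟨hA₀, hA₁, hfin⟩ x h₁ h₂ ⟨C, hC⟩
    have hA₀' : A₀.adjoint.CompactRedEmbedding := hA₀.of_formalAdjoint h₀closed hformal hKcl
    have := hasOrthogonalProjection_kerSub h₁closed
    -- The splitting `x = u + (p + q)` along `N(A₁)^⊥ ⊕ N₀₁ ⊕ N(A₀*)^⊥`.
    have hdec : ∀ n, ∃ u p q : H₁, x n = u + (p + q) ∧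
        (u ∈ A₁.kerSubᗮ ∧ (u, A₁ ⟨x n, h₁ n⟩) ∈ A₁.graph ∧ ‖u‖ ≤ ‖x n‖) ∧
        (p ∈ A₁.kerSub ⊓ A₀.adjoint.kerSub ∧ ‖p‖ ≤ ‖x n‖) ∧
        (q ∈ A₀.adjoint.kerSubᗮ ∧ (q, A₀.adjoint ⟨x n, h₂ n⟩) ∈ A₀.adjoint.graph ∧
          ‖q‖ ≤ ‖x n‖) := by
      intro n
      obtain ⟨v, hv, u, hu, hx, hvn, hun⟩ := exists_orthogonal_decomp A₁.kerSub (x n)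
      obtain ⟨p, hp, q, hq, hvpq, hpn, hqn⟩ :=
        exists_orthogonal_decomp (A₁.kerSub ⊓ A₀.adjoint.kerSub) v
      have hqN : q ∈ A₁.kerSub := by
        rw [show q = v - p by rw [hvpq]; abel]
        exact Submodule.sub_mem _ hv hp.1
      refine ⟨u, p, q, by rw [hx, hvpq]; abel, ⟨hu, ?_, hun⟩, ⟨hp, hpn.trans hvn⟩,
        ?_, ?_, hqn.trans hvn⟩
      · have := A₁.graph.sub_mem (A₁.mem_graph ⟨x n, h₁ n⟩) ((mem_kerSub_iff_graph _ _).1 hv)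
        rw [Prod.mk_sub_mk, sub_zero] at this
        convert this using 2
        change u = x n - v
        rw [hx]; abel
      · -- An element of `N(A₀*)` is the sum of its `N(A₁)^⊥` part and an element of `N₀₁`.
        rw [Submodule.mem_orthogonal]
        intro k hk
        obtain ⟨a, ha, b, hb, rfl, -, -⟩ := exists_orthogonal_decomp A₁.kerSub k
        have ha' : a ∈ A₁.kerSub ⊓ A₀.adjoint.kerSub :=
          ⟨ha, by simpa using Submodule.sub_mem _ hk (hN₁K hb)⟩
        rw [inner_add_left, Submodule.inner_right_of_mem_orthogonal ha' hq,
          Submodule.inner_left_of_mem_orthogonal hqN hb, add_zero]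
      · have := A₀.adjoint.graph.sub_mem (A₀.adjoint.mem_graph ⟨x n, h₂ n⟩)
          ((mem_kerSub_iff_graph _ _).1 (Submodule.add_mem _ (hN₁K hu) hp.2))
        rw [Prod.mk_sub_mk, sub_zero] at this
        convert this using 2
        change q = x n - (u + p)
        rw [hx, hvpq]; abel
    choose u p q hx hu hp hq using hdec
    obtain ⟨φ, hφ, l, hl⟩ := hA₁.exists_subseq (fun n => (hu n).2.1) (fun n => (hu n).1)
      (C := C) (fun n => by
        linarith [hC n, (hu n).2.2, norm_nonneg (A₀.adjoint ⟨x n, h₂ n⟩)])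
    obtain ⟨ψ, hψ, m, hm⟩ := hA₀'.exists_subseq (fun n => (hq (φ n)).2.1)
      (fun n => (hq (φ n)).1) (C := C) (fun n => by
        linarith [hC (φ n), (hq (φ n)).2.2, norm_nonneg (A₁ ⟨x (φ n), h₁ (φ n)⟩)])
    have := FiniteDimensional.proper_rclike 𝕜
      (A₁.kerSub ⊓ A₀.adjoint.kerSub : Submodule 𝕜 H₁)
    obtain ⟨k, -, χ, hχ, hk⟩ := tendsto_subseq_of_bounded
      (Metric.isBounded_closedBall (x := (0 : (A₁.kerSub ⊓ A₀.adjoint.kerSub : Submodule 𝕜 H₁)))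
        (r := C))
      (x := fun n => ⟨p (φ (ψ n)), (hp _).1⟩) (fun n => by
        rw [mem_closedBall_zero_iff]
        change ‖p (φ (ψ n))‖ ≤ C
        linarith [(hp (φ (ψ n))).2, hC (φ (ψ n)), norm_nonneg (A₁ ⟨x (φ (ψ n)), h₁ _⟩),
          norm_nonneg (A₀.adjoint ⟨x (φ (ψ n)), h₂ _⟩)])
    refine ⟨fun n => φ (ψ (χ n)), hφ.comp (hψ.comp hχ), l + (k + m), ?_⟩
    have hk' : Tendsto (fun n => p (φ (ψ (χ n)))) atTop (𝓝 (k : H₁)) :=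
      (continuous_subtype_val.tendsto k).comp hk
    have hl' := hl.comp (hψ.comp hχ).tendsto_atTop
    have hm' := hm.comp hχ.tendsto_atTop
    exact (hl'.add (hk'.add hm')).congr fun n => (hx _).symm
  · intro h
    -- The hypothesis, phrased for sequences in the two graphs.
    have hgraph : ∀ (x : ℕ → H₁) (y : ℕ → H₂) (z : ℕ → H₀), (∀ n, (x n, y n) ∈ A₁.graph) →
        (∀ n, (x n, z n) ∈ A₀.adjoint.graph) → ∀ C : ℝ, (∀ n, ‖x n‖ + ‖y n‖ + ‖z n‖ ≤ C) →
        ∃ φ : ℕ → ℕ, StrictMono φ ∧ ∃ l : H₁, Tendsto (fun n => x (φ n)) atTop (𝓝 l) := by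
      intro x y z hy hz C hC
      refine h x (fun n => mem_domain_of_mem_graph (hy n))
        (fun n => mem_domain_of_mem_graph (hz n)) ⟨C, fun n => ?_⟩
      have e₁ := A₁.mem_graph_snd_inj (A₁.mem_graph ⟨x n, mem_domain_of_mem_graph (hy n)⟩)
        (hy n) rfl
      have e₂ := A₀.adjoint.mem_graph_snd_inj
        (A₀.adjoint.mem_graph ⟨x n, mem_domain_of_mem_graph (hz n)⟩) (hz n) rfl
      rw [e₁, e₂]
      exact hC n
    have hA₀' : A₀.adjoint.CompactRedEmbedding := by
      rintro x hx ⟨C, hC⟩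
      exact hgraph (fun n => x n) (fun _ => 0) (fun n => A₀.adjoint (x n))
        (fun n => (mem_kerSub_iff_graph _ _).1 (hclN₁ (hKcl (hx n))))
        (fun n => A₀.adjoint.mem_graph (x n)) C (fun n => by simpa using hC n)
    refine ⟨?_, ?_, ?_⟩
    · refine hA₀'.of_formalAdjoint h₀'closed hformal.symm ?_
      rw [← Submodule.orthogonal_orthogonal_eq_closure]
      exact Submodule.orthogonal_le (orthogonal_range_adjoint_le h₀dense h₀closed)
    · rintro x hx ⟨C, hC⟩
      exact hgraph (fun n => x n) (fun n => A₁ (x n)) (fun _ => 0)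
        (fun n => A₁.mem_graph (x n))
        (fun n => (mem_kerSub_iff_graph _ _).1 (hN₁K (hx n))) C (fun n => by simpa using hC n)
    · refine FiniteDimensional.of_isCompact_closedBall 𝕜 (r := 1) one_pos (c := 0) ?_
      refine IsSeqCompact.isCompact fun x hx => ?_
      obtain ⟨φ, hφ, l, hl⟩ := hgraph (fun n => x n) (fun _ => 0) (fun _ => 0)
        (fun n => (mem_kerSub_iff_graph _ _).1 (x n).2.1)
        (fun n => (mem_kerSub_iff_graph _ _).1 (x n).2.2) 1
        (fun n => by simpa using hx n)
      have hlN : l ∈ A₁.kerSub ⊓ A₀.adjoint.kerSub :=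
        ⟨(isClosed_kerSub h₁closed).mem_of_tendsto hl (Eventually.of_forall fun n => (x _).2.1),
          (isClosed_kerSub h₀'closed).mem_of_tendsto hl
            (Eventually.of_forall fun n => (x _).2.2)⟩
      have hl' : Tendsto (x ∘ φ) atTop (𝓝 ⟨l, hlN⟩) := tendsto_subtype_rng.2 hl
      exact ⟨⟨l, hlN⟩, Metric.isClosed_closedBall.mem_of_tendsto hl'
        (Eventually.of_forall fun n => hx _), φ, hφ, hl'⟩
end
end
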